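/- Every deterministic Büchi automaton that recognises L_main has at least 66 states. -/

import Mathlib

/-- A (nondeterministic) Büchi/coBüchi automaton: an initial state, a set of
transitions, and a subset of *significant* transitions. -/
structure BuchiAutomaton (σ : Type) (Q : Type) where
  init : Q
  trans : Set (Q × σ × Q)
  sig : Set (Q × σ × Q)
  sig_sub : sig ⊆ trans

namespace BuchiAutomaton

variable {σ Q : Type}

/-- `ρ` is a run of `A` on the infinite word `w`, starting at the state `p`. -/
def IsRunFrom (A : BuchiAutomaton σ Q) (p : Q) (w : ℕ → σ) (ρ : ℕ → Q) : Prop :=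
  ρ 0 = p ∧ ∀ i, (ρ i, w i, ρ (i + 1)) ∈ A.trans

/-- Büchi acceptance: the run contains infinitely many significant transitions. -/
def BuchiAcc (A : BuchiAutomaton σ Q) (w : ℕ → σ) (ρ : ℕ → Q) : Prop :=
  ∀ N, ∃ i, N ≤ i ∧ (ρ i, w i, ρ (i + 1)) ∈ A.sig

/-- coBüchi acceptance: the run contains finitely many significant transitions. -/
def CoBuchiAcc (A : BuchiAutomaton σ Q) (w : ℕ → σ) (ρ : ℕ → Q) : Prop :=
  ∃ N, ∀ i, N ≤ i → (ρ i, w i, ρ (i + 1)) ∉ A.sig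

/-- The language of `A` (as a Büchi automaton), with initial state `p`. -/
def LangFrom (A : BuchiAutomaton σ Q) (p : Q) : Set (ℕ → σ) :=
  {w | ∃ ρ, A.IsRunFrom p w ρ ∧ A.BuchiAcc w ρ}

/-- The language of `A`, read as a Büchi automaton. -/
def Lang (A : BuchiAutomaton σ Q) : Set (ℕ → σ) :=
  A.LangFrom A.init

/-- The language of `A`, read as a coBüchi automaton. -/
def CoLang (A : BuchiAutomaton σ Q) : Set (ℕ → σ) :=
  {w | ∃ ρ, A.IsRunFrom A.init w ρ ∧ A.CoBuchiAcc w ρ}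

/-- `A` is deterministic: at most one outgoing transition per state and letter. -/
def Deterministic (A : BuchiAutomaton σ Q) : Prop :=
  ∀ p a q q', (p, a, q) ∈ A.trans → (p, a, q') ∈ A.trans → q = q'

/-- `FinRun A l p`: `l` is a finite run of `A` from the initial state, ending in
the state `p` (represented as the chronological list of its transitions). -/
inductive FinRun (A : BuchiAutomaton σ Q) : List (Q × σ × Q) → Q → Prop
  | nil : FinRun A [] A.init
  | snoc {l : List (Q × σ × Q)} {p : Q} {a : σ} {q : Q} :
      FinRun A l p → (p, a, q) ∈ A.trans → FinRun A (l ++ [(p, a, q)]) q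

/-- A resolver for `A`: a function from finite runs and letters to transitions,
such that on every finite run from the initial state ending in a state `p` and
every letter `a`, it outputs a transition on `a` with source `p`. -/
structure Resolver (A : BuchiAutomaton σ Q) where
  res : List (Q × σ × Q) → σ → Q × σ × Q
  res_valid : ∀ l p a, A.FinRun l p →
    (res l a).1 = p ∧ (res l a).2.1 = a ∧ res l a ∈ A.trans

/-- The history (finite run) built by a resolver after reading `n` letters of `w`. -/
def Resolver.hist {A : BuchiAutomaton σ Q} (r : Resolver A) (w : ℕ → σ) : ℕ → List (Q × σ × Q)
  | 0 => []
  | n + 1 => r.hist w n ++ [r.res (r.hist w n) (w n)]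

/-- The run induced by the resolver on `w` satisfies the Büchi condition. -/
def Resolver.InducedBuchiAcc {A : BuchiAutomaton σ Q} (r : Resolver A) (w : ℕ → σ) : Prop :=
  ∀ N, ∃ n, N ≤ n ∧ r.res (r.hist w n) (w n) ∈ A.sig

/-- The run induced by the resolver on `w` satisfies the coBüchi condition. -/
def Resolver.InducedCoBuchiAcc {A : BuchiAutomaton σ Q} (r : Resolver A) (w : ℕ → σ) : Prop :=
  ∃ N, ∀ n, N ≤ n → r.res (r.hist w n) (w n) ∉ A.sig

/-- `A` is history-deterministic (as a Büchi automaton). -/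
def HistoryDeterministic (A : BuchiAutomaton σ Q) : Prop :=
  ∃ r : Resolver A, ∀ w ∈ A.Lang, r.InducedBuchiAcc w

/-- `A` is history-deterministic (as a coBüchi automaton). -/
def CoHistoryDeterministic (A : BuchiAutomaton σ Q) : Prop :=
  ∃ r : Resolver A, ∀ w ∈ A.CoLang, r.InducedCoBuchiAcc w

end BuchiAutomaton

/-- The finite factor `w[m..n)` of the infinite word `w`, as a list. -/
def wordSegment {σ : Type} (w : ℕ → σ) (m n : ℕ) : List σ :=
  (List.range (n - m)).map fun i => w (m + i)

/-- `omegaPow X`: the infinite words that can be written as an infinite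
concatenation of finite words, each belonging to `X`. -/
def omegaPow {σ : Type} (X : Set (List σ)) : Set (ℕ → σ) :=
  {w | ∃ φ : ℕ → ℕ, φ 0 = 0 ∧ StrictMono φ ∧ ∀ k, wordSegment w (φ k) (φ (k + 1)) ∈ X}

/-- The alphabet `Σ = {a, b, c, 1, …, 6, r₁, …, r₆, y}` (with `num i` the digit
`i+1` and `res i` the reset letter `r_{i+1}`). -/
inductive Al : Type
  | a | b | c
  | num (i : Fin 6)
  | res (i : Fin 6)
  | y
deriving DecidableEq, Fintype

/-- The states of the classifier DFA. -/
inductive CSt : Type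
  | p | q | t | s | r
  | ell (i : Fin 6)
deriving DecidableEq, Fintype

/-- The (partial) transition function of the classifier. A digit `num i` belongs
to `E = {1,2,3}` iff `i.val < 3`, and to `F = {4,5,6}` otherwise. -/
def clStep : CSt → Al → Option CSt
  | .p, .b => some .p
  | .p, .num _ => some .p
  | .p, .y => some .p
  | .p, .a => some .q
  | .p, .c => some .t
  | .q, .a => some .q
  | .q, .num _ => some .p
  | .q, .y => some .p
  | .q, .b => some .r
  | .q, .c => some .s
  | .t, .c => some .t
  | .t, .b => some .p
  | .t, .a => some .q
  | .t, .num i => if i.val < 3 then some (.ell i) else some .p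
  | .t, .y => some .p
  | .s, .c => some .s
  | .s, .b => some .r
  | .s, .a => some .q
  | .s, .num i => if i.val < 3 then some (.ell i) else some .p
  | .s, .y => some .p
  | .r, .b => some .r
  | .r, .a => some .q
  | .r, .c => some .s
  | .r, .num i => if 3 ≤ i.val then some (.ell i) else some .p
  | .r, .y => some .p
  | _, _ => none

/-- The run of the classifier on a finite word, from a given state. -/
def clRun : CSt → List Al → Option CSt
  | c, [] => some c
  | c, l :: w =>
    match clStep c l with
    | some c' => clRun c' w
    | none => none

/-- The language `L_α` (for `α : Fin 6`, representing `L_{α+1}`): the finite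
words whose run in the classifier from `p` is defined and ends in `ℓ_α`. -/
def Lcl (α : Fin 6) : Set (List Al) :=
  {w | clRun .p w = some (.ell α)}

/-- `L_main = (Σ^* ⋃_{α≠β} (L_α ∪ {r_α}) L_β L_β Σ^* y)^ω`. -/
def LMain : Set (ℕ → Al) :=
  omegaPow {w | ∃ α β : Fin 6, α ≠ β ∧ ∃ u v₁ v₂ v₃ z : List Al,
    (v₁ ∈ Lcl α ∨ v₁ = [Al.res α]) ∧ v₂ ∈ Lcl β ∧ v₃ ∈ Lcl β ∧
    w = u ++ v₁ ++ v₂ ++ v₃ ++ z ++ [Al.y]}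

/-! ### Finite factors of infinite words -/

theorem wordSegment_self {σ : Type} (w : ℕ → σ) (m : ℕ) : wordSegment w m m = [] := by
  simp [wordSegment]

theorem wordSegment_succ {σ : Type} (w : ℕ → σ) {m n : ℕ} (h : m ≤ n) :
    wordSegment w m (n + 1) = wordSegment w m n ++ [w n] := by
  have h1 : n + 1 - m = (n - m) + 1 := by omega
  have h2 : m + (n - m) = n := by omega
  simp [wordSegment, h1, List.range_succ, h2]

theorem wordSegment_append {σ : Type} (w : ℕ → σ) {m n k : ℕ} (h : m ≤ n) (h' : n ≤ k) :
    wordSegment w m n ++ wordSegment w n k = wordSegment w m k := by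
  induction k, h' using Nat.le_induction with
  | base => simp [wordSegment_self]
  | succ k hk ih =>
    rw [wordSegment_succ w hk, wordSegment_succ w (h.trans hk), ← List.append_assoc, ih]

theorem length_wordSegment {σ : Type} (w : ℕ → σ) (m n : ℕ) :
    (wordSegment w m n).length = n - m := by
  simp [wordSegment]

theorem mem_wordSegment {σ : Type} (w : ℕ → σ) (m n : ℕ) (l : σ) :
    l ∈ wordSegment w m n ↔ ∃ i, m ≤ i ∧ i < n ∧ w i = l := by
  simp only [wordSegment, List.mem_map, List.mem_range]
  constructor
  · rintro ⟨i, hi, rfl⟩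
    exact ⟨m + i, by omega, by omega, rfl⟩
  · rintro ⟨i, h1, h2, rfl⟩
    exact ⟨i - m, by omega, by congr 1; omega⟩

theorem wordSegment_shift {σ : Type} (w : ℕ → σ) (d m n : ℕ) :
    wordSegment (fun i => w (i + d)) m n = wordSegment w (m + d) (n + d) := by
  have : n + d - (m + d) = n - m := by omega
  simp only [wordSegment, this]
  congr 1
  funext i
  congr 1
  omega

/-- A sequence of nonempty finite words can be concatenated to an infinite word. -/
theorem exists_concat {σ : Type} (u : ℕ → List σ) (hu : ∀ k, u k ≠ []) :
    ∃ (w : ℕ → σ) (φ : ℕ → ℕ), φ 0 = 0 ∧ StrictMono φ ∧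
      ∀ k, wordSegment w (φ k) (φ (k + 1)) = u k := by
  classical
  let pre : ℕ → List σ := fun k => ((List.range k).map u).flatten
  have pre_succ : ∀ k, pre (k + 1) = pre k ++ u k := fun k => by
    simp [pre, List.range_succ]
  have hmono : StrictMono fun k => (pre k).length := strictMono_nat_of_lt_succ fun k => by
    have := List.length_pos_of_ne_nil (hu k)
    simp only [pre_succ, List.length_append]
    omega
  have hlen : ∀ k, k ≤ (pre k).length := fun k => hmono.le_apply
  have hpre : ∀ {k k'}, k ≤ k' → pre k <+: pre k' := by
    intro k k' h
    induction k', h using Nat.le_induction with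
    | base => exact List.prefix_rfl
    | succ n _ ih => exact ih.trans (pre_succ n ▸ List.prefix_append _ _)
  let w : ℕ → σ := fun i => (pre (i + 1))[i]'(hlen (i + 1))
  have hw : ∀ k i (h : i < (pre k).length), w i = (pre k)[i] := by
    intro k i h
    rcases le_total k (i + 1) with hk | hk
    · exact ((hpre hk).getElem h).symm
    · exact (hpre hk).getElem (hlen (i + 1))
  refine ⟨w, fun k => (pre k).length, by simp [pre], hmono, fun k => ?_⟩
  apply List.ext_getElem
  · simp [length_wordSegment, pre_succ]
  · intro i h1 h2
    have h3 : (pre k).length + i < (pre (k + 1)).length := by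
      simp only [pre_succ, List.length_append]
      omega
    simp only [wordSegment, List.getElem_map, List.getElem_range]
    rw [hw (k + 1) _ h3]
    simp [pre_succ]

/-! ### Combinatorial description of the language -/

/-- Words with a factor in `(L_α ∪ {r_α}) L_β L_β` for some `α ≠ β`. -/
def HasInfix (w : List Al) : Prop :=
  ∃ α β : Fin 6, α ≠ β ∧ ∃ u v₁ v₂ v₃ z : List Al,
    (v₁ ∈ Lcl α ∨ v₁ = [Al.res α]) ∧ v₂ ∈ Lcl β ∧ v₃ ∈ Lcl β ∧ w = u ++ v₁ ++ v₂ ++ v₃ ++ z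

theorem HasInfix.append_left {w : List Al} (h : HasInfix w) (s : List Al) :
    HasInfix (s ++ w) := by
  obtain ⟨α, β, hne, u, v₁, v₂, v₃, z, h₁, h₂, h₃, rfl⟩ := h
  exact ⟨α, β, hne, s ++ u, v₁, v₂, v₃, z, h₁, h₂, h₃, by simp⟩

theorem HasInfix.append_right {w : List Al} (h : HasInfix w) (s : List Al) :
    HasInfix (w ++ s) := by
  obtain ⟨α, β, hne, u, v₁, v₂, v₃, z, h₁, h₂, h₃, rfl⟩ := h
  exact ⟨α, β, hne, u, v₁, v₂, v₃, z ++ s, h₁, h₂, h₃, by simp⟩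

theorem LMain_eq : LMain = omegaPow {w | ∃ s, HasInfix s ∧ w = s ++ [Al.y]} := by
  unfold LMain HasInfix
  congr 1
  ext w
  constructor
  · rintro ⟨α, β, hne, u, v₁, v₂, v₃, z, h₁, h₂, h₃, rfl⟩
    exact ⟨_, ⟨α, β, hne, u, v₁, v₂, v₃, z, h₁, h₂, h₃, rfl⟩, rfl⟩
  · rintro ⟨s, ⟨α, β, hne, u, v₁, v₂, v₃, z, h₁, h₂, h₃, rfl⟩, rfl⟩
    exact ⟨α, β, hne, u, v₁, v₂, v₃, z, h₁, h₂, h₃, rfl⟩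

theorem mem_LMain_iff (w : ℕ → Al) :
    w ∈ LMain ↔ ∀ N, ∃ m n, N ≤ m ∧ m ≤ n ∧
      ∃ s, HasInfix s ∧ wordSegment w m n = s ++ [Al.y] := by
  rw [LMain_eq]
  constructor
  · rintro ⟨φ, -, hφ, h⟩ N
    exact ⟨φ N, φ (N + 1), hφ.le_apply, (hφ N.lt_succ_self).le, h N⟩
  · intro h
    choose m n hm hmn s hs hseg using h
    have hlt : ∀ N, m N < n N := fun N => by
      have := congrArg List.length (hseg N)
      simp only [length_wordSegment, List.length_append, List.length_singleton] at this
      omega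
    let φ : ℕ → ℕ := fun k => Nat.rec 0 (fun _ N => n N) k
    refine ⟨φ, rfl, strictMono_nat_of_lt_succ fun k => (hm (φ k)).trans_lt (hlt _), fun k => ?_⟩
    refine ⟨wordSegment w (φ k) (m (φ k)) ++ s (φ k), (hs _).append_left _, ?_⟩
    rw [List.append_assoc, ← hseg]
    exact (wordSegment_append w (hm _) (hmn _)).symm

theorem shift_mem_LMain_iff (w : ℕ → Al) (d : ℕ) :
    (fun i => w (i + d)) ∈ LMain ↔ w ∈ LMain := by
  simp only [mem_LMain_iff, wordSegment_shift]
  constructor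
  · intro h N
    obtain ⟨m, n, h1, h2, h3⟩ := h N
    exact ⟨m + d, n + d, by omega, by omega, h3⟩
  · intro h N
    obtain ⟨m, n, h1, h2, h3⟩ := h (N + d)
    refine ⟨m - d, n - d, by omega, by omega, ?_⟩
    rwa [Nat.sub_add_cancel (by omega), Nat.sub_add_cancel (by omega)]

/-! ### The automaton tracking the occurrences of infixes -/

/-- The non-final states of the classifier. -/
inductive Cls : Type
  | p | q | t | s | r
deriving DecidableEq

namespace Cls

instance : Fintype Cls := ⟨{p, q, t, s, r}, fun x => by cases x <;> decide⟩

/-- The inclusion into the states of the classifier. -/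
def toC : Cls → CSt
  | p => .p
  | q => .q
  | t => .t
  | s => .s
  | r => .r

/-- Whether reading the digit `i` in the given state leads to `ℓ_i`. -/
def lab : Cls → Fin 6 → Bool
  | t, i => decide (i.val < 3)
  | s, i => decide (i.val < 3)
  | r, i => decide (3 ≤ i.val)
  | _, _ => false

/-- The successor state, where final states are replaced by `p`. -/
def next : Cls → Al → Cls
  | _, .a => q
  | p, .b => p
  | t, .b => p
  | _, .b => r
  | p, .c => t
  | t, .c => t
  | _, .c => s
  | _, _ => p

/-- A word leading from `p` to the given state without passing a final state. -/
def access : Cls → List Al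
  | p => []
  | q => [.a]
  | t => [.c]
  | s => [.a, .c]
  | r => [.a, .b]

/-- `x.Le x'` if the state `x'` is reached by reading a longer history than `x`. -/
def Le (x x' : Cls) : Prop := x = p ∨ x = x' ∨ (x = t ∧ x' = s)

instance (x x' : Cls) : Decidable (x.Le x') := by unfold Le; infer_instance

end Cls

/-- The last label seen, and whether its repetition completes an infix. -/
abbrev Mode : Type := Fin 6 × Bool

/-- States of the automaton which reads words without infixes. -/
abbrev MSt : Type := Mode × Cls

/-- The mode after seeing a further label; undefined if an infix is completed. -/
def emit (μ : Mode) (i : Fin 6) : Option Mode :=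
  if i = μ.1 then (if μ.2 then none else some μ) else some (i, true)

/-- The transition function of the automaton reading words without infixes. -/
def mStep (m : MSt) : Al → Option MSt
  | .res i => some ((i, false), .p)
  | .num i => if m.2.lab i then (emit m.1 i).map (·, .p) else some (m.1, .p)
  | l => some (m.1, m.2.next l)

/-- The transition function of the automaton reading words without labels and resets. -/
def nStep (x : Cls) : Al → Option Cls
  | .res _ => none
  | .num i => if x.lab i then none else some .p
  | l => some (x.next l)

/-- The run of a partial deterministic automaton on a finite word. -/
def pRun {S : Type} (f : S → Al → Option S) : S → List Al → Option S
  | x, [] => some x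
  | x, l :: u => (f x l).bind fun x' => pRun f x' u

theorem pRun_append {S : Type} (f : S → Al → Option S) (x : S) (u v : List Al) :
    pRun f x (u ++ v) = (pRun f x u).bind fun x' => pRun f x' v := by
  induction u generalizing x with
  | nil => rfl
  | cons l u ih => cases h : f x l <;> simp [pRun, h, ih]

theorem pRun_append_of_eq {S : Type} {f : S → Al → Option S} {x x' : S} {u : List Al}
    (h : pRun f x u = some x') (v : List Al) : pRun f x (u ++ v) = pRun f x' v := by
  simp [pRun_append, h]

theorem pRun_append_of_none {S : Type} {f : S → Al → Option S} {x : S} {u : List Al}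
    (h : pRun f x u = none) (v : List Al) : pRun f x (u ++ v) = none := by
  simp [pRun_append, h]

theorem clRun_eq_pRun (x : CSt) (u : List Al) : clRun x u = pRun clStep x u := by
  induction u generalizing x with
  | nil => rfl
  | cons l u ih => cases h : clStep x l <;> simp [pRun, clRun, h, ih]

theorem clRun_append_of_eq {x x' : CSt} {u : List Al}
    (h : clRun x u = some x') (v : List Al) : clRun x (u ++ v) = clRun x' v := by
  simp only [clRun_eq_pRun] at *
  exact pRun_append_of_eq h v

theorem clStep_num (x : Cls) (i : Fin 6) :
    clStep x.toC (.num i) = some (if x.lab i then .ell i else .p) := by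
  revert i; cases x <;> decide

theorem clStep_of_nStep {x x' : Cls} {l : Al} (h : nStep x l = some x') :
    clStep x.toC l = some x'.toC := by
  revert x x' l; decide

theorem clRun_of_nRun {x x' : Cls} {u : List Al} (h : pRun nStep x u = some x') :
    clRun x.toC u = some x'.toC := by
  induction u generalizing x with
  | nil => simp only [pRun, Option.some.injEq] at h; simp [clRun, h]
  | cons l u ih =>
    simp only [pRun, Option.bind_eq_some_iff] at h
    obtain ⟨x₁, h1, h2⟩ := h
    simp [clRun, clStep_of_nStep h1, ih h2]

theorem mStep_of_nStep {x x' : Cls} {l : Al} (h : nStep x l = some x') (μ : Mode) :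
    mStep (μ, x) l = some (μ, x') := by
  cases l with
  | res i => simp [nStep] at h
  | num i => cases hl : x.lab i <;> simp_all [nStep, mStep]
  | _ => simp_all [nStep, mStep]

theorem mRun_of_nRun {x x' : Cls} {u : List Al} (h : pRun nStep x u = some x') (μ : Mode) :
    pRun mStep (μ, x) u = some (μ, x') := by
  induction u generalizing x with
  | nil => simp only [pRun, Option.some.injEq] at h; simp [pRun, h]
  | cons l u ih =>
    simp only [pRun, Option.bind_eq_some_iff] at h
    obtain ⟨x₁, h1, h2⟩ := h
    simp [pRun, mStep_of_nStep h1, ih h2]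

/-- Reading an element of `L_α` emits exactly the label `α`. -/
theorem mRun_of_clRun {x : Cls} {u : List Al} {α : Fin 6}
    (h : clRun x.toC u = some (.ell α)) (μ : Mode) :
    pRun mStep (μ, x) u = (emit μ α).map (·, .p) := by
  induction u generalizing x with
  | nil => cases x <;> simp [clRun, Cls.toC] at h
  | cons l u ih =>
    cases hn : nStep x l with
    | some x' =>
      simp only [clRun, clStep_of_nStep hn] at h
      simp [pRun, mStep_of_nStep hn, ih h]
    | none =>
      cases l with
      | res i => cases x <;> simp [clRun, clStep, Cls.toC] at h
      | num i =>
        have hl : x.lab i = true := by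
          by_contra hl; simp [nStep, hl] at hn
        simp only [clRun, clStep_num, hl, if_true] at h
        cases u with
        | nil =>
          simp only [clRun, Option.some.injEq, CSt.ell.injEq] at h
          subst h
          cases he : emit μ i <;> simp [pRun, mStep, hl, he]
        | cons l' u => simp [clRun, clStep] at h
      | _ => simp [nStep] at hn

theorem Cls.Le.lab {x x' : Cls} (h : x.Le x') {i : Fin 6} (hl : x.lab i = true) :
    x'.lab i = true := by
  revert x x' i; decide

theorem Cls.Le.next {x x' x₁ : Cls} (h : x.Le x') {l : Al} (hl : nStep x l = some x₁) :
    x₁.Le (x'.next l) := by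
  revert x x' x₁ l; decide

theorem emit_eq_some {μ μ' : Mode} {i : Fin 6} (h : emit μ i = some μ') : μ'.1 = i := by
  unfold emit at h
  split_ifs at h <;> simp_all [← Option.some.inj h]

/-- Starting a reading of an element of `L_α` earlier does not lose its label. -/
theorem mRun_of_clRun_of_le {x x' : Cls} {u : List Al} {α : Fin 6}
    (h : clRun x.toC u = some (.ell α)) (hx : x.Le x') (μ : Mode) {m : MSt}
    (hm : pRun mStep (μ, x') u = some m) : m.2 = .p ∧ m.1.1 = α := by
  induction u generalizing x x' μ with
  | nil => cases x <;> simp [clRun, Cls.toC] at h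
  | cons l u ih =>
    simp only [pRun, Option.bind_eq_some_iff] at hm
    obtain ⟨⟨μ₁, x₁'⟩, hm1, hm2⟩ := hm
    cases hn : nStep x l with
    | some x₁ =>
      simp only [clRun, clStep_of_nStep hn] at h
      refine ih h ?_ μ₁ hm2
      have := hx.next hn
      suffices x₁' = x'.next l by rwa [this]
      cases l with
      | res i => simp [nStep] at hn
      | num i =>
        simp only [mStep] at hm1
        have hp : x'.next (.num i) = .p := by cases x' <;> rfl
        split_ifs at hm1
        · cases he : emit μ i <;> simp_all
        · simp_all
      | _ => simp_all [mStep]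
    | none =>
      cases l with
      | res i => cases x <;> simp [clRun, clStep, Cls.toC] at h
      | num i =>
        have hl : x.lab i = true := by
          by_contra hl; simp [nStep, hl] at hn
        simp only [clRun, clStep_num, hl, if_true] at h
        cases u with
        | nil =>
          simp only [clRun, Option.some.injEq, CSt.ell.injEq] at h
          subst h
          simp only [pRun, Option.some.injEq] at hm2
          subst hm2
          simp only [mStep, hx.lab hl, if_true, Option.map_eq_some_iff, Prod.mk.injEq] at hm1
          obtain ⟨μ₂, he, rfl, rfl⟩ := hm1
          exact ⟨rfl, emit_eq_some he⟩
        | cons l' u => simp [clRun, clStep] at h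
      | _ => simp [nStep] at hn

theorem mRun_eq_none_of_hasInfix {u : List Al} (h : HasInfix u) (m : MSt) :
    pRun mStep m u = none := by
  obtain ⟨α, β, hne, u, v₁, v₂, v₃, z, h₁, h₂, h₃, rfl⟩ := h
  apply pRun_append_of_none
  rw [List.append_assoc, List.append_assoc]
  cases hu : pRun mStep m u with
  | none => exact pRun_append_of_none hu _
  | some m₁ =>
    rw [pRun_append_of_eq hu]
    cases hv : pRun mStep m₁ v₁ with
    | none => exact pRun_append_of_none hv _
    | some m₂ =>
      rw [pRun_append_of_eq hv]
      obtain ⟨⟨γ, f⟩, x⟩ := m₂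
      have hm : x = .p ∧ γ = α := by
        rcases h₁ with h₁ | rfl
        · exact mRun_of_clRun_of_le (x := .p) h₁ (Or.inl rfl) m₁.1 hv
        · simp only [pRun, mStep, Option.bind_some, Option.some.injEq, Prod.mk.injEq] at hv
          exact ⟨hv.2.symm, hv.1.1.symm⟩
      obtain ⟨rfl, rfl⟩ := hm
      have e₂ := mRun_of_clRun (x := .p) h₂ (γ, f)
      rw [show emit (γ, f) β = some (β, true) by simp [emit, hne.symm]] at e₂
      rw [pRun_append_of_eq e₂, mRun_of_clRun (x := .p) h₃]
      simp [emit]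

/-- The state `m` is justified by suffixes of the word `h`. -/
def Tracks (h : List Al) (m : MSt) : Prop :=
  ∃ h₁ v g, h = h₁ ++ v ++ g ∧ (v ∈ Lcl m.1.1 ∨ v = [Al.res m.1.1]) ∧
    clRun .p g = some m.2.toC ∧
    (m.1.2 = true → v ∈ Lcl m.1.1 ∧ ∃ γ, γ ≠ m.1.1 ∧ ∃ h₂ v', h₁ = h₂ ++ v' ∧
      (v' ∈ Lcl γ ∨ v' = [Al.res γ]))

theorem Tracks.of_nStep {h : List Al} {μ : Mode} {x x' : Cls} (H : Tracks h (μ, x)) {l : Al}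
    (hl : nStep x l = some x') : Tracks (h ++ [l]) (μ, x') := by
  obtain ⟨h₁, v, g, rfl, hv, hg, hf⟩ := H
  refine ⟨h₁, v, g ++ [l], by simp, hv, ?_, hf⟩
  rw [clRun_append_of_eq hg]
  simp [clRun, clStep_of_nStep hl]

theorem Tracks.step {h : List Al} {m : MSt} (H : Tracks h m) (l : Al) :
    (∀ m', mStep m l = some m' → Tracks (h ++ [l]) m') ∧
      (mStep m l = none → HasInfix (h ++ [l])) := by
  obtain ⟨⟨α, f⟩, x⟩ := m
  cases hn : nStep x l with
  | some x' =>
    rw [mStep_of_nStep hn]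
    refine ⟨?_, by simp⟩
    rintro m' ⟨⟩
    exact H.of_nStep hn
  | none =>
    cases l with
    | res i =>
      refine ⟨?_, by simp [mStep]⟩
      rintro m' ⟨⟩
      exact ⟨h, [Al.res i], [], by simp, Or.inr rfl, rfl, by simp⟩
    | num i =>
      have hl : x.lab i = true := by
        by_contra hl; simp [nStep, hl] at hn
      obtain ⟨h₁, v, g, rfl, hv, hg, hf⟩ := H
      have hgi : g ++ [Al.num i] ∈ Lcl i := by
        change clRun _ _ = _
        rw [clRun_append_of_eq hg]
        simp [clRun, clStep_num, hl]
      simp only [mStep, hl, if_true]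
      by_cases hi : i = α
      · subst hi
        cases f with
        | false =>
          refine ⟨?_, by simp [emit]⟩
          intro m' hm'
          simp only [emit, if_true, Bool.false_eq_true, if_false, Option.map_some,
            Option.some.injEq] at hm'
          subst hm'
          exact ⟨h₁ ++ v, g ++ [Al.num i], [], by simp, Or.inl hgi, rfl, by simp⟩
        | true =>
          refine ⟨by simp [emit], fun _ => ?_⟩
          obtain ⟨hv', γ, hγ, h₂, v', rfl, hv''⟩ := hf rfl
          exact ⟨γ, i, hγ, h₂, v', v, g ++ [Al.num i], [], hv'', hv', hgi, by simp⟩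
      · refine ⟨?_, by simp [emit, hi]⟩
        intro m' hm'
        simp only [emit, hi, if_false, Option.map_some, Option.some.injEq] at hm'
        subst hm'
        exact ⟨h₁ ++ v, g ++ [Al.num i], [], by simp, Or.inl hgi, rfl,
          fun _ => ⟨hgi, α, fun e => hi e.symm, h₁, v, rfl, hv⟩⟩
    | _ => simp [nStep] at hn

theorem Tracks.hasInfix {h : List Al} {m : MSt} (H : Tracks h m) {u : List Al}
    (hu : pRun mStep m u = none) : HasInfix (h ++ u) := by
  induction u generalizing h m with
  | nil => simp [pRun] at hu
  | cons l u ih =>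
    cases hs : mStep m l with
    | none => simpa using ((H.step l).2 hs).append_right u
    | some m' =>
      simp only [pRun, hs, Option.bind_some] at hu
      simpa using ih ((H.step l).1 m' hs) hu

theorem hasInfix_of_mRun_eq_none {m : MSt} {i : Fin 6} {u : List Al}
    (h : pRun mStep m (.res i :: u) = none) : HasInfix (.res i :: u) :=
  Tracks.hasInfix (h := [Al.res i]) (m := ((i, false), .p))
    ⟨[], [Al.res i], [], by simp, Or.inr rfl, rfl, by simp⟩ h

/-! ### Particular words -/

/-- A word emitting exactly the label `β` from every state. -/
def labelWord (β : Fin 6) : List Al :=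
  if β.val < 3 then [.c, .num β] else [.a, .b, .num β]

theorem y_notMem_labelWord (β : Fin 6) : Al.y ∉ labelWord β := by revert β; decide

theorem y_notMem_access (x : Cls) : Al.y ∉ x.access := by revert x; decide

theorem mRun_labelWord (μ : Mode) (x : Cls) (β : Fin 6) :
    pRun mStep (μ, x) (labelWord β) = (emit μ β).map (·, .p) := by
  apply mRun_of_clRun
  revert x β; decide

theorem mRun_labelWord_self (β : Fin 6) (x : Cls) :
    pRun mStep ((β, false), x) (labelWord β) = some ((β, false), .p) := by
  simp [mRun_labelWord, emit]

theorem mRun_labelWord_complete (β : Fin 6) (x : Cls) :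
    pRun mStep ((β, true), x) (labelWord β) = none := by
  simp [mRun_labelWord, emit]

theorem mRun_labelWord_of_ne {α β : Fin 6} (h : β ≠ α) (f : Bool) (x : Cls) :
    pRun mStep ((α, f), x) (labelWord β) = some ((β, true), .p) := by
  simp [mRun_labelWord, emit, h]

theorem nRun_access (x : Cls) : pRun nStep .p x.access = some x := by revert x; decide

theorem nRun_y_access (x x' : Cls) : pRun nStep x (.y :: x'.access) = some x' :=
  nRun_access _

/-- Every state can be reached from every other one without reading `y`. -/
theorem exists_mRun (m m' : MSt) :
    ∃ u, Al.y ∉ u ∧ pRun mStep m u = some m' ∧ ∃ i u', u = .res i :: u' := by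
  obtain ⟨⟨α, f⟩, x⟩ := m'
  cases f with
  | false =>
    refine ⟨.res α :: x.access, ?_, ?_, _, _, rfl⟩
    · simp [y_notMem_access]
    · exact mRun_of_nRun (nRun_access x) (α, false)
  | true =>
    refine ⟨.res (α + 1) :: (labelWord α ++ x.access), ?_, ?_, _, _, rfl⟩
    · simp [y_notMem_access, y_notMem_labelWord]
    · have h : α ≠ α + 1 := by revert α; decide
      change pRun mStep ((α + 1, false), .p) _ = _
      rw [pRun_append_of_eq (mRun_labelWord_of_ne h _ _)]
      exact mRun_of_nRun (nRun_access x) _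

theorem exists_mRun_eq_none (m : MSt) : ∃ u, Al.y ∉ u ∧ pRun mStep m u = none := by
  refine ⟨.res 0 :: (labelWord 1 ++ labelWord 1), by decide, ?_⟩
  change pRun mStep ((0, false), .p) _ = _
  decide

/-- Two states of the classifier differ in the labels they emit after some word. -/
theorem exists_separating {x x' : Cls} (h : x ≠ x') :
    ∃ v x₁ x₁', pRun nStep x v = some x₁ ∧ pRun nStep x' v = some x₁' ∧ ∃ e : Bool,
      (∀ i : Fin 6, decide (i.val < 3) = e → x₁.lab i = true ∧ x₁'.lab i = false) ∨
      (∀ i : Fin 6, decide (i.val < 3) = e → x₁'.lab i = true ∧ x₁.lab i = false) := by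
  have key : ∀ x x' : Cls, x ≠ x' → ∃ v ∈ [[], [Al.b]], ∃ x₁ x₁',
      pRun nStep x v = some x₁ ∧ pRun nStep x' v = some x₁' ∧ ∃ e : Bool,
      (∀ i : Fin 6, decide (i.val < 3) = e → x₁.lab i = true ∧ x₁'.lab i = false) ∨
      (∀ i : Fin 6, decide (i.val < 3) = e → x₁'.lab i = true ∧ x₁.lab i = false) := by
    decide
  obtain ⟨v, -, hv⟩ := key x x' h
  exact ⟨v, hv⟩

theorem mRun_separating {α α' β : Fin 6} {f f' : Bool} {x x' x₁ x₁' : Cls} {v : List Al}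
    (hx : pRun nStep x v = some x₁) (hx' : pRun nStep x' v = some x₁')
    (h : x₁.lab β = true) (h' : x₁'.lab β = false) (hα : β ≠ α) (hα' : β ≠ α') :
    pRun mStep ((α, f), x) (v ++ .num β :: labelWord β) = none ∧
      pRun mStep ((α', f'), x') (v ++ .num β :: labelWord β) ≠ none := by
  rw [pRun_append_of_eq (mRun_of_nRun hx _), pRun_append_of_eq (mRun_of_nRun hx' _)]
  simp [pRun, mStep, h, h', hα, hα', mRun_labelWord, emit]

/-- Distinct states are distinguished by the words without infixes read from them. -/
theorem exists_distinguishing {m m' : MSt} (h : m ≠ m') :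
    ∃ u, (pRun mStep m u = none ∧ pRun mStep m' u ≠ none) ∨
      (pRun mStep m' u = none ∧ pRun mStep m u ≠ none) := by
  obtain ⟨⟨α, f⟩, x⟩ := m
  obtain ⟨⟨α', f'⟩, x'⟩ := m'
  by_cases hx : x = x'
  · subst hx
    by_cases hα : α = α'
    · subst hα
      refine ⟨labelWord α, ?_⟩
      have hf : f ≠ f' := by rintro rfl; exact h rfl
      cases f <;> cases f' <;> simp_all [mRun_labelWord, emit]
    · cases f with
      | true =>
        refine ⟨labelWord α, Or.inl ⟨mRun_labelWord_complete _ _, ?_⟩⟩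
        simp [mRun_labelWord_of_ne hα]
      | false =>
        refine ⟨labelWord α ++ labelWord α, Or.inr ⟨?_, ?_⟩⟩
        · rw [pRun_append_of_eq (mRun_labelWord_of_ne hα _ _), mRun_labelWord_complete]
        · simp [pRun_append_of_eq (mRun_labelWord_self _ _), mRun_labelWord_self]
  · obtain ⟨v, x₁, x₁', h₁, h₁', e, hs⟩ := exists_separating hx
    have hβ : ∀ (e : Bool) (α α' : Fin 6),
        ∃ β : Fin 6, decide (β.val < 3) = e ∧ β ≠ α ∧ β ≠ α' := by decide
    obtain ⟨β, he, hne, hne₂⟩ := hβ e α α'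
    refine ⟨v ++ .num β :: labelWord β, hs.imp (fun hs => ?_) fun hs => ?_⟩
    · exact mRun_separating h₁ h₁' (hs β he).1 (hs β he).2 hne hne₂
    · exact mRun_separating h₁' h₁ (hs β he).1 (hs β he).2 hne₂ hne

/-! ### Total deterministic automata -/

section Automaton

variable {R : Type} (δ : R → Al → R) (sg : R → Al → Prop)

/-- The state reached from `q` after reading `n` letters of `w`. -/
def runState (q : R) (w : ℕ → Al) (n : ℕ) : R := (wordSegment w 0 n).foldl δ q

/-- Reading the finite word from the given state passes a significant transition. -/
def SigOn : R → List Al → Prop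
  | _, [] => False
  | q, l :: u => sg q l ∨ SigOn (δ q l) u

/-- From every state, exactly the words in `L_main` pass infinitely many significant
transitions. -/
def Recognises : Prop :=
  ∀ q w, w ∈ LMain ↔ ∀ N, ∃ i, N ≤ i ∧ sg (runState δ q w i) (w i)

variable {δ sg}

theorem sigOn_append (q : R) (u v : List Al) :
    SigOn δ sg q (u ++ v) ↔ SigOn δ sg q u ∨ SigOn δ sg (u.foldl δ q) v := by
  induction u generalizing q with
  | nil => simp [SigOn]
  | cons l u ih => simp [SigOn, ih, or_assoc]

theorem runState_eq (q : R) (w : ℕ → Al) {m n : ℕ} (h : m ≤ n) :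
    runState δ q w n = (wordSegment w m n).foldl δ (runState δ q w m) := by
  simp [runState, ← List.foldl_append, wordSegment_append w (Nat.zero_le m) h]

theorem runState_succ (q : R) (w : ℕ → Al) (n : ℕ) :
    runState δ q w (n + 1) = δ (runState δ q w n) (w n) := by
  simp [runState, wordSegment_succ w (Nat.zero_le n)]

theorem sigOn_wordSegment (q : R) (w : ℕ → Al) {m n : ℕ} (h : m ≤ n) :
    SigOn δ sg (runState δ q w m) (wordSegment w m n) ↔
      ∃ i, m ≤ i ∧ i < n ∧ sg (runState δ q w i) (w i) := by
  induction n, h using Nat.le_induction with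
  | base =>
    simp only [wordSegment_self, SigOn, false_iff, not_exists, not_and]
    intros
    omega
  | succ n h ih =>
    rw [wordSegment_succ w h, sigOn_append, ih, ← runState_eq q w h]
    simp only [SigOn, or_false]
    constructor
    · rintro (⟨i, h1, h2, h3⟩ | h3)
      · exact ⟨i, h1, by omega, h3⟩
      · exact ⟨n, h, by omega, h3⟩
    · rintro ⟨i, h1, h2, h3⟩
      rcases Nat.lt_succ_iff_lt_or_eq.1 h2 with h2 | rfl
      · exact Or.inl ⟨i, h1, h2, h3⟩
      · exact Or.inr h3

/-- Following chosen nonempty words forever yields an infinite word. -/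
theorem exists_following {X : Type} (π : X → R) (u : X → List Al) (nxt : X → X)
    (hu : ∀ x, u x ≠ []) (hπ : ∀ x, π (nxt x) = (u x).foldl δ (π x)) (x : X) :
    ∃ (w : ℕ → Al) (φ : ℕ → ℕ), φ 0 = 0 ∧ StrictMono φ ∧
      ∀ k, wordSegment w (φ k) (φ (k + 1)) = u (nxt^[k] x) ∧
        runState δ (π x) w (φ k) = π (nxt^[k] x) := by
  obtain ⟨w, φ, h0, hφ, hw⟩ := exists_concat (fun k => u (nxt^[k] x)) fun k => hu _
  refine ⟨w, φ, h0, hφ, fun k => ⟨hw k, ?_⟩⟩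
  induction k with
  | zero => simp [h0, runState, wordSegment_self]
  | succ k ih =>
    rw [runState_eq _ w (hφ k.lt_succ_self).le, ih, hw, Function.iterate_succ_apply', hπ]

theorem mem_LMain_of_sigOn (H : Recognises δ sg) {q : R} {w : ℕ → Al} {φ : ℕ → ℕ}
    (hφ : StrictMono φ)
    (h : ∀ k, SigOn δ sg (runState δ q w (φ k)) (wordSegment w (φ k) (φ (k + 1)))) :
    w ∈ LMain := by
  refine (H q w).2 fun N => ?_
  obtain ⟨i, h1, -, h3⟩ := (sigOn_wordSegment q w (hφ N.lt_succ_self).le).1 (h N)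
  exact ⟨i, hφ.le_apply.trans h1, h3⟩

/-- No state allows to pass significant transitions forever without reading `y`. -/
theorem Recognises.not_of_y_free (H : Recognises δ sg) (I : R → Prop)
    (h : ∀ q, I q → ∃ u, Al.y ∉ u ∧ SigOn δ sg q u ∧ I (u.foldl δ q)) (q : R) : ¬ I q := by
  intro hq
  choose! u hy hs hI using h
  obtain ⟨w, φ, h0, hφ, hw⟩ := exists_following (δ := δ) (X := {q // I q}) Subtype.val
    (fun x => u x) (fun x => ⟨_, hI x x.2⟩)
    (fun x hx => by simpa [hx, SigOn] using hs x x.2) (fun x => rfl) ⟨q, hq⟩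
  have hw' : w ∈ LMain := mem_LMain_of_sigOn H hφ fun k => by
    rw [(hw k).1, (hw k).2]
    exact hs _ (Subtype.prop _)
  obtain ⟨m, n, -, hmn, s, -, hseg⟩ := (mem_LMain_iff w).1 hw' 0
  obtain ⟨i, -, -, hi⟩ := (mem_wordSegment w m n .y).1 (by simp [hseg])
  have hfree : ∀ k, Al.y ∉ wordSegment w 0 (φ k) := by
    intro k
    induction k with
    | zero => simp [h0, wordSegment_self]
    | succ k ih =>
      rw [← wordSegment_append w (Nat.zero_le _) (hφ k.lt_succ_self).le, (hw k).1]
      simp [ih, hy _ (Subtype.prop _)]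
  exact hfree (i + 1) ((mem_wordSegment _ _ _ _).2 ⟨i, Nat.zero_le _, hφ.le_apply, hi⟩)

/-- No state allows to pass significant transitions forever without reading infixes. -/
theorem Recognises.not_of_infix_free (H : Recognises δ sg) (I : MSt → R → Prop)
    (h : ∀ m q, I m q → ∃ u m', pRun mStep m u = some m' ∧ SigOn δ sg q u ∧
      I m' (u.foldl δ q)) (m : MSt) (q : R) : ¬ I m q := by
  intro hq
  choose! u μ hμ hs hI using h
  let nxt : {x : MSt × R // I x.1 x.2} → {x : MSt × R // I x.1 x.2} :=
    fun x => ⟨(_, _), hI x.1.1 x.1.2 x.2⟩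
  obtain ⟨w, φ, h0, hφ, hw⟩ := exists_following (δ := δ) (fun x => x.1.2)
    (fun x => u x.1.1 x.1.2) nxt
    (fun x hx => by simpa [hx, SigOn] using hs x.1.1 x.1.2 x.2) (fun x => rfl) ⟨(m, q), hq⟩
  have hw' : w ∈ LMain := mem_LMain_of_sigOn H hφ fun k => by
    rw [(hw k).1, (hw k).2]
    exact hs _ _ (nxt^[k] ⟨(m, q), hq⟩).2
  obtain ⟨m', n, -, hmn, s, hs', hseg⟩ := (mem_LMain_iff w).1 hw' 0
  have hrun : ∀ k, pRun mStep m (wordSegment w 0 (φ k)) =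
      some (nxt^[k] ⟨(m, q), hq⟩).1.1 := by
    intro k
    induction k with
    | zero => simp [h0, wordSegment_self, pRun]
    | succ k ih =>
      rw [← wordSegment_append w (Nat.zero_le _) (hφ k.lt_succ_self).le, (hw k).1,
        pRun_append_of_eq ih, Function.iterate_succ_apply']
      exact hμ _ _ (nxt^[k] ⟨(m, q), hq⟩).2
  have hm₁ := hrun n
  have hle : n ≤ φ n := hφ.le_apply
  have hinf : HasInfix (wordSegment w 0 (φ n)) := by
    rw [← wordSegment_append w (Nat.zero_le _) hle,
      ← wordSegment_append w (Nat.zero_le _) hmn, hseg]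
    exact ((hs'.append_right _).append_left _).append_right _
  simp [mRun_eq_none_of_hasInfix hinf] at hm₁

/-- Loops reading an infix followed by `y` pass a significant transition. -/
theorem Recognises.sigOn_of_loop (H : Recognises δ sg) {q : R} {u s t : List Al}
    (hloop : u.foldl δ q = q) (hu : u = s ++ Al.y :: t) (hs : HasInfix s) :
    SigOn δ sg q u := by
  by_contra hsig
  obtain ⟨w, φ, h0, hφ, hw⟩ := exists_following (δ := δ) (X := Unit) (fun _ => q)
    (fun _ => u) id (by simp [hu]) (fun _ => hloop.symm) ()
  have hw' : w ∈ LMain := by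
    refine (mem_LMain_iff w).2 fun N => ?_
    have hlt := hφ N.lt_succ_self
    refine ⟨φ N, φ N + (s.length + 1), hφ.le_apply, by omega, s, hs, ?_⟩
    have hN := (hw N).1
    have hlen := congrArg List.length hN
    simp only [length_wordSegment, hu, List.length_append, List.length_cons] at hlen
    rw [← wordSegment_append w (n := φ N + (s.length + 1)) (by omega) (by omega),
      show u = (s ++ [Al.y]) ++ t by simp [hu]] at hN
    exact (List.append_inj hN (by simp [length_wordSegment])).1
  obtain ⟨i, -, hi⟩ := (H q w).1 hw' 0
  have hfree : ∀ k, ¬ SigOn δ sg q (wordSegment w 0 (φ k)) := by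
    intro k
    induction k with
    | zero => simp [h0, wordSegment_self, SigOn]
    | succ k ih =>
      rw [← wordSegment_append w (Nat.zero_le _) (hφ k.lt_succ_self).le, sigOn_append]
      have h2 := (hw k).2
      rw [runState] at h2
      rw [h2, (hw k).1]
      simp [ih, hsig]
  exact hfree (i + 1) ((sigOn_wordSegment q w (Nat.zero_le _)).2
    ⟨i, Nat.zero_le _, hφ.le_apply, hi⟩)

/-! ### Reachability in products -/

/-- Reachability in the product of a partial automaton with a total one. -/
def ProdReach (δ : R → Al → R) {S : Type} (f : S → Al → Option S) (a b : S × R) : Prop :=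
  ∃ u, pRun f a.1 u = some b.1 ∧ u.foldl δ a.2 = b.2

theorem ProdReach.refl {S : Type} (f : S → Al → Option S) (a : S × R) : ProdReach δ f a a :=
  ⟨[], rfl, rfl⟩

theorem ProdReach.trans {S : Type} {f : S → Al → Option S} {a b c : S × R}
    (h : ProdReach δ f a b) (h' : ProdReach δ f b c) : ProdReach δ f a c := by
  obtain ⟨u, h1, h2⟩ := h
  obtain ⟨v, h3, h4⟩ := h'
  exact ⟨u ++ v, by rw [pRun_append_of_eq h1, h3], by rw [List.foldl_append, h2, h4]⟩

/-- Every element of a finite preorder is below an element in a top class. -/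
theorem exists_recurrent {X : Type} [Finite X] (r : X → X → Prop) (hr : ∀ a, r a a)
    (ht : ∀ a b c, r a b → r b c → r a c) (a : X) : ∃ b, r a b ∧ ∀ c, r b c → r c b := by
  obtain ⟨b, hb, hmin⟩ := exists_minimalFor_of_wellFoundedLT (r a)
    (fun b => {c | r b c}.ncard) ⟨a, hr a⟩
  refine ⟨b, hb, fun c hc => ?_⟩
  have hsub : {d | r c d} ⊆ {d | r b d} := fun d hd => ht _ _ _ hc hd
  have heq := Set.eq_of_subset_of_ncard_le hsub
    (hmin (ht _ _ _ hb hc) (Set.ncard_le_ncard hsub (Set.toFinite _))) (Set.toFinite _)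
  have : b ∈ {d | r c d} := heq ▸ hr b
  exact this

/-! ### The recurrent part reading words without infixes -/

/-- `P` is a strongly connected component of the product of the automaton reading words
without infixes with the given automaton, in which no significant transitions are passed. -/
structure IsCore (δ : R → Al → R) (sg : R → Al → Prop) (P : MSt × R → Prop) : Prop where
  nonempty : ∃ a, P a
  closed : ∀ {a b}, P a → ProdReach δ mStep a b → P b
  connected : ∀ {a b}, P a → P b → ProdReach δ mStep a b
  safe : ∀ {a u}, P a → pRun mStep a.1 u ≠ none → ¬ SigOn δ sg a.2 u

theorem Recognises.exists_isCore [Finite R] [Nonempty R] (H : Recognises δ sg) :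
    ∃ P, IsCore δ sg P := by
  have hsafe : ∃ a : MSt × R, ∀ u, pRun mStep a.1 u ≠ none → ¬ SigOn δ sg a.2 u := by
    by_contra! hcon
    obtain ⟨q⟩ := ‹Nonempty R›
    refine H.not_of_infix_free (fun _ _ => True) (fun m q _ => ?_) ((0, true), .p) q trivial
    obtain ⟨u, hu, hs⟩ := hcon (m, q)
    obtain ⟨m', hm'⟩ := Option.ne_none_iff_exists'.1 hu
    exact ⟨u, m', hm', hs, trivial⟩
  obtain ⟨a, ha⟩ := hsafe
  obtain ⟨b, hab, hb⟩ := exists_recurrent (ProdReach δ mStep) (ProdReach.refl mStep)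
    (fun _ _ _ => ProdReach.trans) a
  refine ⟨ProdReach δ mStep b, ⟨b, ProdReach.refl _ _⟩, ProdReach.trans,
    fun h h' => (hb _ h).trans h', ?_⟩
  intro c u hc hu hs
  obtain ⟨v, hv, hv'⟩ := hab.trans hc
  refine ha (v ++ u) (by rwa [pRun_append_of_eq hv]) ?_
  rw [sigOn_append, hv']
  exact Or.inr hs

/-- The states occurring in `P`. -/
def InCore (P : MSt × R → Prop) (k : R) : Prop := ∃ m, P (m, k)

/-- The states from which the states occurring in `P` cannot be reached without reading `y`. -/
def Away (δ : R → Al → R) (P : MSt × R → Prop) (n : R) : Prop :=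
  ∀ u : List Al, Al.y ∉ u → ¬ InCore P (u.foldl δ n)

theorem Away.not_inCore {P : MSt × R → Prop} {n : R} (h : Away δ P n) : ¬ InCore P n :=
  h [] (by simp)

namespace IsCore

variable {P : MSt × R → Prop}

theorem run (C : IsCore δ sg P) {m m' : MSt} {k : R} {u : List Al} (h : P (m, k))
    (hu : pRun mStep m u = some m') : P (m', u.foldl δ k) :=
  C.closed h ⟨u, hu, rfl⟩

/-- Completing an infix and returning passes a significant transition. -/
theorem sigOn (C : IsCore δ sg P) (H : Recognises δ sg) {m m' : MSt} {k : R} {u : List Al}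
    (h : P (m, k)) (hu : pRun mStep m u = none) (h' : P (m', u.foldl δ k)) :
    SigOn δ sg k u := by
  by_contra hs
  obtain ⟨t₀, -, ht₀, i, t₁, rfl⟩ := exists_mRun m m
  obtain ⟨t₂, ht₂, ht₂'⟩ := C.connected (C.run h ht₀) h
  have ht : pRun mStep m (Al.res i :: t₁ ++ t₂) = some m := by
    rw [pRun_append_of_eq ht₀, ht₂]
  have htk : (Al.res i :: t₁ ++ t₂).foldl δ k = k := by
    rw [List.foldl_append]; exact ht₂'
  have hy : pRun mStep m' [Al.y] = some (m'.1, .p) := by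
    obtain ⟨μ, x⟩ := m'; cases x <;> rfl
  obtain ⟨v, hv, hv'⟩ := C.connected (C.run h' hy) h
  have hinf : HasInfix (Al.res i :: t₁ ++ t₂ ++ u) :=
    hasInfix_of_mRun_eq_none (m := m) (i := i) (u := t₁ ++ t₂ ++ u)
      ((pRun_append_of_eq ht u).trans hu)
  have hloop : (Al.res i :: t₁ ++ t₂ ++ u ++ Al.y :: v).foldl δ k = k := by
    rw [List.foldl_append, List.foldl_append, htk]
    exact hv'
  have := H.sigOn_of_loop hloop rfl hinf
  rw [sigOn_append, sigOn_append, htk, List.foldl_append, htk] at this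
  rcases this with (h1 | h1) | h1
  · exact C.safe h (show pRun mStep m _ ≠ none from ht ▸ Option.some_ne_none _) h1
  · exact hs h1
  · refine C.safe h' ?_ h1
    change pRun mStep m' ([Al.y] ++ v) ≠ none
    rw [pRun_append_of_eq hy]
    exact fun e => Option.some_ne_none _ (hv.symm.trans e)

theorem unique (C : IsCore δ sg P) (H : Recognises δ sg) {m m' : MSt} {k : R}
    (h : P (m, k)) (h' : P (m', k)) : m = m' := by
  by_contra hne
  have key : ∀ {m m' : MSt} {u : List Al}, P (m, k) → P (m', k) →
      pRun mStep m u = none → pRun mStep m' u ≠ none → False := by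
    intro m m' u h h' hu hu'
    obtain ⟨m₁, hm₁⟩ := Option.ne_none_iff_exists'.1 hu'
    exact C.safe h' hu' (C.sigOn H h hu (C.run h' hm₁))
  obtain ⟨u, ⟨h1, h2⟩ | ⟨h1, h2⟩⟩ := exists_distinguishing hne
  · exact key h h' h1 h2
  · exact key h' h h1 h2

theorem exists_state (C : IsCore δ sg P) (m : MSt) : ∃ k, P (m, k) := by
  obtain ⟨⟨m₀, k⟩, h⟩ := C.nonempty
  obtain ⟨u, -, hu, -⟩ := exists_mRun m₀ m
  exact ⟨_, C.run h hu⟩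

theorem exists_away (C : IsCore δ sg P) (H : Recognises δ sg) : ∃ n, Away δ P n := by
  by_contra! hcon
  obtain ⟨⟨m₀, k₀⟩, h₀⟩ := C.nonempty
  refine H.not_of_y_free (InCore P) (fun k hk => ?_) k₀ ⟨m₀, h₀⟩
  obtain ⟨m, hm⟩ := hk
  obtain ⟨u, hy, hu⟩ := exists_mRun_eq_none m
  have := hcon (u.foldl δ k)
  simp only [Away, not_forall, not_not] at this
  obtain ⟨v, hyv, m', hm'⟩ := this
  rw [← List.foldl_append] at hm'
  refine ⟨u ++ v, by simp [hy, hyv], ?_, m', hm'⟩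
  exact C.sigOn H hm (pRun_append_of_none hu v) ‹_›

/-- The tracking states and any further states bound the number of states from below. -/
theorem card_le [Fintype R] (C : IsCore δ sg P) (H : Recognises δ sg) {κ : MSt → R}
    (hκ : ∀ m, P (m, κ m)) {Y : Type} [Fintype Y] {g : Y → R} (hg : Function.Injective g)
    (hκg : ∀ m y, κ m ≠ g y) : 60 + Fintype.card Y ≤ Fintype.card R := by
  have hinj : Function.Injective κ := fun m m' h => C.unique H (hκ m) (h ▸ hκ m')
  have hc : Fintype.card MSt = 60 := by decide
  have := Fintype.card_le_of_injective _ (hinj.sumElim hg hκg)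
  rwa [Fintype.card_sum, hc] at this

theorem card_le_of_not_inCore [Fintype R] (C : IsCore δ sg P) (H : Recognises δ sg)
    {Y : Type} [Fintype Y] {g : Y → R} (hg : Function.Injective g)
    (hgP : ∀ y, ¬ InCore P (g y)) : 60 + Fintype.card Y ≤ Fintype.card R := by
  choose κ hκ using C.exists_state
  exact C.card_le H hκ hg fun m y h => hgP y ⟨m, h ▸ hκ m⟩

theorem card_option_cls : Fintype.card (Option Cls) = 6 := by decide

/-- With at most 65 states, some tracking state of each mode has a unique copy. -/
theorem exists_unique_copy [Fintype R] (C : IsCore δ sg P) (H : Recognises δ sg)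
    (hcard : Fintype.card R < 66) (μ : Mode) :
    ∃ x k, P ((μ, x), k) ∧ ∀ k', P ((μ, x), k') → k' = k := by
  by_contra! hcon
  choose κ hκ using C.exists_state
  choose κ' hκ' hne using fun x => hcon x _ (hκ (μ, x))
  obtain ⟨n, hn⟩ := C.exists_away H
  have := C.card_le H hκ (Y := Option Cls) (g := fun o => o.elim n κ') ?_ ?_
  · rw [card_option_cls] at this
    omega
  · rintro (_ | x) (_ | x') h
    · rfl
    · exact (hn.not_inCore ⟨_, (show n = κ' x' from h) ▸ hκ' x'⟩).elim
    · exact (hn.not_inCore ⟨_, (show κ' x = n from h) ▸ hκ' x⟩).elim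
    · have h' : κ' x = κ' x' := h
      have := C.unique H (hκ' x) (h' ▸ hκ' x')
      simp_all
  · rintro m (_ | x) h
    · exact hn.not_inCore ⟨m, (show κ m = n from h) ▸ hκ m⟩
    · have heq : κ m = κ' x := h
      obtain rfl := C.unique H (hκ m) (heq ▸ hκ' x)
      exact (hne x heq.symm).elim

/-- Completing an infix from a unique copy leads away. -/
theorem away_of_unique (C : IsCore δ sg P) (H : Recognises δ sg) {m : MSt} {k : R}
    (hk : P (m, k)) (huniq : ∀ k', P (m, k') → k' = k) {u : List Al} (hy : Al.y ∉ u)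
    (hu : pRun mStep m u = none) : Away δ P (u.foldl δ k) := by
  rintro v hyv ⟨m', hm'⟩
  rw [← List.foldl_append] at hm'
  have hs := C.sigOn H hk (pRun_append_of_none hu v) hm'
  obtain ⟨t, hyt, ht, -⟩ := exists_mRun m' m
  have hback := huniq _ (C.run hm' ht)
  refine H.not_of_y_free (fun q => q = k) ?_ k rfl
  rintro q rfl
  refine ⟨u ++ v ++ t, by simp [hy, hyv, hyt], (sigOn_append _ _ _).2 (Or.inl hs), ?_⟩
  rwa [List.foldl_append]

end IsCore

/-! ### Reading words without labels -/

/-- In a strongly connected part of the product with the automaton reading words without labels,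
one cannot stay while emitting two distinct labels. -/
theorem Recognises.false_of_two_labels (H : Recognises δ sg) {G : Cls × R → Prop}
    (hclosed : ∀ {a b}, G a → ProdReach δ nStep a b → G b)
    (hconn : ∀ {a b}, G a → G b → ProdReach δ nStep a b)
    {x x₁ : Cls} {q : R} (hG : G (x, q)) {v : List Al} (hv : pRun nStep x v = some x₁)
    {i j : Fin 6} (hij : i ≠ j) (hi : x₁.lab i = true) (hj : x₁.lab j = true)
    (hGi : ∃ x', G (x', (v ++ [Al.num i]).foldl δ q))
    (hGj : ∃ x', G (x', (v ++ [Al.num j]).foldl δ q)) : False := by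
  have back : ∀ q', (∃ x', G (x', q')) →
      ∃ w, pRun nStep .p w = some x ∧ (Al.y :: w).foldl δ q' = q := by
    rintro q' ⟨x', hq'⟩
    exact hconn (hclosed hq' ⟨[Al.y], by cases x' <;> rfl, rfl⟩ : G (.p, δ q' Al.y)) hG
  have label : ∀ (k : Fin 6) (w : List Al), x₁.lab k = true → pRun nStep .p w = some x →
      Al.y :: w ++ (v ++ [Al.num k]) ∈ Lcl k := by
    intro k w hk hw
    have h1 := clRun_of_nRun (x := .p) (x' := x) (u := Al.y :: w) hw
    change clRun (Cls.toC .p) _ = _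
    rw [clRun_append_of_eq h1, clRun_append_of_eq (clRun_of_nRun hv)]
    simp [clRun, clStep_num, hk]
  have quiet : ∀ (k : Fin 6) (w : List Al), x₁.lab k = true → pRun nStep .p w = some x →
      (Al.y :: w).foldl δ ((v ++ [Al.num k]).foldl δ q) = q →
      ¬ SigOn δ sg q (v ++ [Al.num k] ++ Al.y :: w) := by
    intro k w hk hw hback hs
    refine H.not_of_infix_free (fun m q' => m = ((k, false), x) ∧ q' = q) ?_ _ q ⟨rfl, rfl⟩
    rintro m q' ⟨rfl, rfl⟩
    refine ⟨_, _, ?_, hs, rfl, ?_⟩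
    · rw [List.append_assoc, pRun_append_of_eq (mRun_of_nRun hv _)]
      have h1 : pRun mStep ((k, false), x₁) [Al.num k] = some ((k, false), .p) := by
        simp [pRun, mStep, hk, emit]
      rw [pRun_append_of_eq h1]
      exact mRun_of_nRun (x := .p) (u := Al.y :: w) hw _
    · rwa [List.foldl_append]
  obtain ⟨wi, hwi, hqi⟩ := back _ hGi
  obtain ⟨wj, hwj, hqj⟩ := back _ hGj
  have hsi := quiet i wi hi hwi hqi
  have hsj := quiet j wj hj hwj hqj
  have hli : (v ++ [Al.num i] ++ Al.y :: wi).foldl δ q = q := by rwa [List.foldl_append]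
  have hlj : (v ++ [Al.num j] ++ Al.y :: wj).foldl δ q = q := by rwa [List.foldl_append]
  have hinf : HasInfix (v ++ [Al.num i] ++ (Al.y :: wi ++ (v ++ [Al.num i])) ++
      (Al.y :: wi ++ (v ++ [Al.num j])) ++ (Al.y :: wj ++ (v ++ [Al.num j]))) :=
    ⟨i, j, hij, v ++ [Al.num i], _, _, _, [], Or.inl (label i wi hi hwi), label j wi hj hwi,
      label j wj hj hwj, by simp⟩
  have app : ∀ {s t : List Al}, s.foldl δ q = q ∧ ¬ SigOn δ sg q s →
      t.foldl δ q = q ∧ ¬ SigOn δ sg q t → (s ++ t).foldl δ q = q ∧ ¬ SigOn δ sg q (s ++ t) := by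
    rintro s t ⟨h1, h2⟩ ⟨h3, h4⟩
    rw [List.foldl_append, sigOn_append, h1]
    exact ⟨h3, not_or.2 ⟨h2, h4⟩⟩
  obtain ⟨hloop, hquiet⟩ := app (app (app ⟨hli, hsi⟩ ⟨hli, hsi⟩) ⟨hlj, hsj⟩) ⟨hlj, hsj⟩
  exact hquiet (H.sigOn_of_loop hloop (t := wj) (by simp) hinf)

/-- With at most 65 states, the tracking states are reachable by words without labels. -/
theorem IsCore.exists_nRun_inCore [Fintype R] {P : MSt × R → Prop} (C : IsCore δ sg P)
    (H : Recognises δ sg) (hcard : Fintype.card R < 66) (q : R) :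
    ∃ u x, pRun nStep .p u = some x ∧ InCore P (u.foldl δ q) := by
  by_contra! hcon
  obtain ⟨b, hb, hrec⟩ := exists_recurrent (ProdReach δ nStep) (ProdReach.refl nStep)
    (fun _ _ _ => ProdReach.trans) (.p, q)
  have hconn : ∀ {a c}, ProdReach δ nStep b a → ProdReach δ nStep b c →
      ProdReach δ nStep a c := fun h h' => (hrec _ h).trans h'
  have hout : ∀ {x q'}, ProdReach δ nStep b (x, q') → ¬ InCore P q' := by
    intro x q' h
    obtain ⟨u, hu, rfl⟩ := hb.trans h
    exact hcon u x hu
  have hex : ∀ x, ∃ q', ProdReach δ nStep b (x, q') := fun x =>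
    ⟨_, Al.y :: x.access, nRun_y_access _ _, rfl⟩
  have hsep : ∀ {x x₁ x' x₁' : Cls} {q' : R} {v : List Al} {e : Bool},
      ProdReach δ nStep b (x, q') → ProdReach δ nStep b (x', q') →
      pRun nStep x v = some x₁ → pRun nStep x' v = some x₁' →
      (∀ i : Fin 6, decide (i.val < 3) = e → x₁.lab i = true ∧ x₁'.lab i = false) → False := by
    intro x x₁ x' x₁' q' v e h h' hv hv' hl
    have hij : ∀ e : Bool, ∃ i j : Fin 6, i ≠ j ∧ decide (i.val < 3) = e ∧
        decide (j.val < 3) = e := by decide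
    obtain ⟨i, j, hij, hi, hj⟩ := hij e
    have stay : ∀ k : Fin 6, x₁'.lab k = false →
        ∃ x₂, ProdReach δ nStep b (x₂, (v ++ [Al.num k]).foldl δ q') := by
      intro k hk
      refine ⟨.p, h'.trans ⟨v ++ [Al.num k], ?_, rfl⟩⟩
      simp [pRun_append_of_eq hv', pRun, nStep, hk]
    exact H.false_of_two_labels ProdReach.trans hconn h hv hij (hl i hi).1 (hl j hj).1
      (stay i (hl i hi).2) (stay j (hl j hj).2)
  have huniq : ∀ {x x' q'}, ProdReach δ nStep b (x, q') → ProdReach δ nStep b (x', q') →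
      x = x' := by
    intro x x' q' h h'
    by_contra hne
    obtain ⟨v, x₁, x₁', hv, hv', e, hl | hl⟩ := exists_separating hne
    · exact hsep h h' hv hv' hl
    · exact hsep h' h hv' hv hl
  choose ρ hρ using hex
  have hall : ∀ q', ¬ InCore P q' → ∃ x, ProdReach δ nStep b (x, q') := by
    intro q' hq'
    by_contra! hno
    have := C.card_le_of_not_inCore H (Y := Option Cls) (g := fun o => o.elim q' ρ) ?_ ?_
    · rw [IsCore.card_option_cls] at this
      omega
    · rintro (_ | x) (_ | x') h
      · rfl
      · exact (hno x' ((show q' = ρ x' from h) ▸ hρ x')).elim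
      · exact (hno x ((show ρ x = q' from h) ▸ hρ x)).elim
      · have h' : ρ x = ρ x' := h
        rw [huniq (hρ x) (h' ▸ hρ x')]
    · rintro (_ | x)
      · exact hq'
      · exact hout (hρ x)
  obtain ⟨n, hn⟩ := C.exists_away H
  obtain ⟨x, hx⟩ := hall n hn.not_inCore
  have hlab : ∀ x : Cls, pRun nStep x [Al.c] = some (x.next Al.c) ∧
      (x.next Al.c).lab 0 = true ∧ (x.next Al.c).lab 1 = true := by decide
  obtain ⟨h1, h2, h3⟩ := hlab x
  exact H.false_of_two_labels ProdReach.trans hconn hx h1 (by decide : (0 : Fin 6) ≠ 1) h2 h3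
    (hall _ (hn _ (by simp))) (hall _ (hn _ (by simp)))

theorem Recognises.le_card [Fintype R] [Nonempty R] (H : Recognises δ sg) :
    66 ≤ Fintype.card R := by
  classical
  by_contra! hcard
  obtain ⟨P, C⟩ := H.exists_isCore
  have hy : ∀ m : MSt, pRun mStep m [Al.y] = some (m.1, .p) := by
    rintro ⟨μ, x⟩; cases x <;> rfl
  have hreturn : ∀ n : R, ∃ z x m, pRun nStep .p z = some x ∧
      P (m, (Al.y :: z).foldl δ n) := by
    intro n
    obtain ⟨z, x, hz, m, hm⟩ := C.exists_nRun_inCore H hcard (δ n Al.y)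
    exact ⟨z, x, m, hz, hm⟩
  choose z xz mz hz hP using hreturn
  obtain ⟨β, hβ⟩ : ∃ β : Fin 6, ∀ n, Away δ P n → (mz n).1 ≠ (β, false) := by
    by_contra! hcon
    choose g hg hgm using hcon
    have := C.card_le_of_not_inCore H (Y := Fin 6) (g := g) (fun β β' h => ?_)
      (fun β => (hg β).not_inCore)
    · rw [Fintype.card_fin] at this
      omega
    · have h1 := hgm β
      rw [h, hgm β'] at h1
      exact (Prod.mk.inj h1).1.symm
  obtain ⟨x, k, hk, huniq⟩ := C.exists_unique_copy H hcard (β, true)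
  -- The words lead away, although their only label is `β`.
  have hexit : ∀ (μ : Mode) (k₁ : R), P ((μ, .p), k₁) → μ ≠ (β, false) →
      ∃ u, pRun mStep (μ, .p) u = none ∧
        pRun mStep ((β, false), .p) u = some ((β, false), .p) ∧ Away δ P (u.foldl δ k₁) := by
    have hcomplete : ∀ k₁ : R, P (((β, true), .p), k₁) →
        ∃ u, pRun mStep ((β, true), .p) u = none ∧
          pRun mStep ((β, false), .p) u = some ((β, false), .p) ∧
          Away δ P (u.foldl δ k₁) := by
      intro k₁ hk₁
      have hacc := mRun_of_nRun (nRun_access x)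
      refine ⟨x.access ++ labelWord β, ?_, ?_, ?_⟩
      · rw [pRun_append_of_eq (hacc _), mRun_labelWord_complete]
      · rw [pRun_append_of_eq (hacc _), mRun_labelWord_self]
      · rw [List.foldl_append, huniq _ (C.run hk₁ (hacc _))]
        exact C.away_of_unique H hk huniq (y_notMem_labelWord β) (mRun_labelWord_complete _ _)
    rintro ⟨α, f⟩ k₁ hk₁ hne
    by_cases hα : β = α
    · subst hα
      cases f with
      | false => exact (hne rfl).elim
      | true => exact hcomplete k₁ hk₁
    · have hlab := mRun_labelWord_of_ne hα f .p
      obtain ⟨u, h1, h2, h3⟩ := hcomplete _ (C.run hk₁ hlab)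
      refine ⟨labelWord β ++ u, ?_, ?_, ?_⟩
      · rw [pRun_append_of_eq hlab, h1]
      · rw [pRun_append_of_eq (mRun_labelWord_self _ _), h2]
      · rwa [List.foldl_append]
  obtain ⟨k₀, hk₀⟩ := C.exists_state ((β, true), .p)
  refine H.not_of_infix_free
    (fun m k₁ => m = ((β, false), .p) ∧ ∃ μ, μ ≠ (β, false) ∧ P ((μ, .p), k₁))
    ?_ _ k₀ ⟨rfl, (β, true), by simp, hk₀⟩
  rintro _ k₁ ⟨rfl, μ, hμ, hk₁⟩
  obtain ⟨u, h1, h2, h3⟩ := hexit μ k₁ hk₁ hμ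
  have hend : P (((mz (u.foldl δ k₁)).1, .p),
      (u ++ (Al.y :: z (u.foldl δ k₁) ++ [Al.y])).foldl δ k₁) := by
    rw [List.foldl_append, List.foldl_append]
    exact C.run (hP _) (hy _)
  refine ⟨_, ((β, false), .p), ?_, C.sigOn H hk₁ (pRun_append_of_none h1 _) hend, rfl, _,
    hβ _ h3, hend⟩
  rw [pRun_append_of_eq h2]
  have hzr := mRun_of_nRun (x := .p) (u := Al.y :: z (u.foldl δ k₁)) (hz _) (β, false)
  rw [pRun_append_of_eq hzr, hy]

end Automaton

/-! ### Automata as total automata on the reachable states -/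

theorem exists_append_word {σ : Type} (u : List σ) (w : ℕ → σ) :
    ∃ w' : ℕ → σ, wordSegment w' 0 u.length = u ∧ (fun i => w' (i + u.length)) = w := by
  refine ⟨fun i => if h : i < u.length then u[i] else w (i - u.length), ?_, by simp⟩
  apply List.ext_getElem (by simp [length_wordSegment])
  intro i _ h
  simp [wordSegment, h]

theorem exists_mem_LMain (u : List Al) : ∃ w ∈ LMain, wordSegment w 0 u.length = u := by
  obtain ⟨w, φ, h0, hφ, hw⟩ := exists_concat
    (fun _ => [Al.res 0] ++ labelWord 1 ++ labelWord 1 ++ [Al.y]) (by simp)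
  have hmem : w ∈ LMain := by
    refine ⟨φ, h0, hφ, fun k => ?_⟩
    rw [hw]
    exact ⟨0, 1, by decide, [], [Al.res 0], labelWord 1, labelWord 1, [], Or.inr rfl, rfl, rfl,
      by simp⟩
  obtain ⟨w', h1, rfl⟩ := exists_append_word u w
  exact ⟨w', (shift_mem_LMain_iff w' _).1 hmem, h1⟩

namespace BuchiAutomaton

variable {Q : Type} (A : BuchiAutomaton Al Q)

open Classical in
/-- The transition function of a deterministic automaton, completed by loops. -/
noncomputable def next (q : Q) (l : Al) : Q :=
  if h : ∃ q', (q, l, q') ∈ A.trans then h.choose else q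

variable {A}

theorem Deterministic.next_eq (hdet : A.Deterministic) {q q' : Q} {l : Al}
    (h : (q, l, q') ∈ A.trans) : A.next q l = q' := by
  have hex : ∃ q', (q, l, q') ∈ A.trans := ⟨q', h⟩
  rw [next, dif_pos hex]
  exact hdet _ _ _ _ hex.choose_spec h

theorem Deterministic.eq_runState (hdet : A.Deterministic) {w : ℕ → Al} {ρ : ℕ → Q}
    (h : A.IsRunFrom A.init w ρ) (n : ℕ) : ρ n = runState A.next A.init w n := by
  induction n with
  | zero => simpa [runState, wordSegment_self] using h.1
  | succ n ih => rw [runState_succ, ← ih, hdet.next_eq (h.2 n)]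

theorem Deterministic.next_mem_trans (hdet : A.Deterministic) (hlang : A.Lang = LMain)
    (u : List Al) (l : Al) :
    (u.foldl A.next A.init, l, A.next (u.foldl A.next A.init) l) ∈ A.trans := by
  obtain ⟨w, hw, hseg⟩ := exists_mem_LMain (u ++ [l])
  rw [← hlang] at hw
  obtain ⟨ρ, hρ, -⟩ := hw
  rw [List.length_append, List.length_singleton, wordSegment_succ w (Nat.zero_le _)] at hseg
  obtain ⟨h1, h2⟩ := List.append_inj' hseg rfl
  have ht := hρ.2 u.length
  rw [hdet.eq_runState hρ u.length, runState, h1, (List.cons.inj h2).1] at ht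
  rwa [hdet.next_eq ht]

theorem Deterministic.mem_LMain_iff (hdet : A.Deterministic) (hlang : A.Lang = LMain)
    (w : ℕ → Al) : w ∈ LMain ↔ ∀ N, ∃ i, N ≤ i ∧ (runState A.next A.init w i, w i,
      A.next (runState A.next A.init w i) (w i)) ∈ A.sig := by
  simp only [← runState_succ]
  rw [← hlang]
  constructor
  · rintro ⟨ρ, hρ, hacc⟩
    obtain rfl : ρ = runState A.next A.init w := funext (hdet.eq_runState hρ)
    exact hacc
  · intro h
    refine ⟨runState A.next A.init w, ⟨by simp [runState, wordSegment_self], fun i => ?_⟩, h⟩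
    rw [runState_succ]
    exact hdet.next_mem_trans hlang _ _

variable (A) in
/-- The reachable states of a deterministic automaton. -/
abbrev Reachable : Type := {q : Q // ∃ u : List Al, u.foldl A.next A.init = q}

variable (A) in
/-- The transition function on the reachable states. -/
noncomputable def reachableNext (q : A.Reachable) (l : Al) : A.Reachable :=
  ⟨A.next q l, by
    obtain ⟨_, u, rfl⟩ := q
    exact ⟨u ++ [l], by simp⟩⟩

theorem coe_foldl_reachableNext (u : List Al) (q : A.Reachable) :
    (u.foldl A.reachableNext q).val = u.foldl A.next q := by
  induction u generalizing q with
  | nil => rfl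
  | cons l u ih => exact ih _

theorem Deterministic.recognises (hdet : A.Deterministic) (hlang : A.Lang = LMain) :
    Recognises A.reachableNext fun q l => (q.1, l, A.next q l) ∈ A.sig := by
  rintro ⟨_, u, rfl⟩ w
  obtain ⟨w', h1, rfl⟩ := exists_append_word u w
  have hrun : ∀ i, (runState A.reachableNext ⟨_, u, rfl⟩ (fun i => w' (i + u.length)) i).val =
      runState A.next A.init w' (i + u.length) := by
    intro i
    rw [runState_eq A.init w' (Nat.le_add_left u.length i), runState, coe_foldl_reachableNext,
      wordSegment_shift, Nat.zero_add, runState, h1]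
  simp only [hrun]
  rw [shift_mem_LMain_iff, hdet.mem_LMain_iff hlang]
  constructor
  · intro h N
    obtain ⟨i, hi, hs⟩ := h (N + u.length)
    obtain ⟨j, rfl⟩ := Nat.exists_eq_add_of_le' (Nat.le_of_add_left_le hi)
    exact ⟨j, by omega, hs⟩
  · intro h N
    obtain ⟨i, hi, hs⟩ := h N
    exact ⟨i + u.length, by omega, hs⟩

end BuchiAutomaton

/-- Every deterministic Büchi automaton recognising `L_main`
has at least 66 states. -/
theorem det_buchi_for_LMain_ge_66 {Q : Type} [Fintype Q] (A : BuchiAutomaton Al Q)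
    (hdet : A.Deterministic) (hlang : A.Lang = LMain) :
    66 ≤ Fintype.card Q := by
  classical
  have : Nonempty A.Reachable := ⟨⟨A.init, [], rfl⟩⟩
  exact (hdet.recognises hlang).le_card.trans (Fintype.card_subtype_le _)
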